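/- arXiv:1003.5368 — 2 statements merged into one kernel-verified Lean document; each statement's English description precedes it below -/
import Mathlib

section
/- For every nonzero vector v ∈ E*_rW, p_i(A)v = E*_{r+i}A^i v for 0 ≤ i ≤ d, and p_{d+1}(A)v = 0; dually, for every nonzero u ∈ E_tW, p*_i(A*)u = E_{t+i}(A*)^i u for 0 ≤ i ≤ d, and p*_{d+1}(A*)u = 0. -/
open Matrix
open scoped Classical

noncomputable section

/-- The full setup: a `Q`-polynomial distance-regular graph `Γ = (X,R)` of diameter `D ≥ 3`,
with adjacency matrix `A`, primitive idempotents `E_i`, eigenvalues `θ_i`,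
Krein parameters `q^h_{ij}`, a fixed base vertex `x`, dual primitive idempotents `E*_i`,
dual adjacency matrix `A*` and dual eigenvalues `θ*_i`. -/
structure TSetup (X : Type*) [Fintype X] [DecidableEq X] where
  G : SimpleGraph X
  hGconn : G.Connected
  D : ℕ
  hD3 : 3 ≤ D
  hDiamLe : ∀ y z : X, G.dist y z ≤ D
  hDiamEq : ∃ y z : X, G.dist y z = D
  p : ℕ → ℕ → ℕ → ℕ
  hDRG : ∀ h i j : ℕ, h ≤ D → i ≤ D → j ≤ D → ∀ y z : X, G.dist y z = h →
    Nat.card {w : X // G.dist y w = i ∧ G.dist z w = j} = p h i j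
  A : Matrix X X ℂ
  hA : ∀ y z : X, A y z = if G.Adj y z then 1 else 0
  E : ℕ → Matrix X X ℂ
  hEzero : ∀ i : ℕ, D < i → E i = 0
  hEsum : ∑ i ∈ Finset.range (D + 1), E i = 1
  hEidem : ∀ i j : ℕ, i ≤ D → j ≤ D → E i * E j = if i = j then E i else 0
  hEsymm : ∀ i : ℕ, (E i)ᵀ = E i
  hEreal : ∀ i : ℕ, (E i).map (starRingEnd ℂ) = E i
  hE0 : E 0 = (Fintype.card X : ℂ)⁻¹ • Matrix.of (fun _ _ => (1 : ℂ))
  θ : ℕ → ℝ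
  hθinj : ∀ i j : ℕ, i ≤ D → j ≤ D → θ i = θ j → i = j
  hAspec : A = ∑ i ∈ Finset.range (D + 1), (θ i : ℂ) • E i
  q : ℕ → ℕ → ℕ → ℝ
  hKrein : ∀ i j : ℕ, i ≤ D → j ≤ D →
    Matrix.hadamard (E i) (E j) =
      (Fintype.card X : ℂ)⁻¹ • ∑ h ∈ Finset.range (D + 1), (q h i j : ℂ) • E h
  hQpoly0 : ∀ h i j : ℕ, h ≤ D → i ≤ D → j ≤ D →
    (i + j < h ∨ h + j < i ∨ h + i < j) → q h i j = 0
  hQpoly1 : ∀ h i j : ℕ, h ≤ D → i ≤ D → j ≤ D →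
    (h = i + j ∨ i = h + j ∨ j = h + i) → q h i j ≠ 0
  x : X
  Estar : ℕ → Matrix X X ℂ
  hEstarzero : ∀ i : ℕ, D < i → Estar i = 0
  hEstar : ∀ i : ℕ, i ≤ D → ∀ y z : X,
    Estar i y z = if y = z ∧ G.dist x y = i then 1 else 0
  Astar : Matrix X X ℂ
  hAstar : ∀ y z : X, Astar y z = if y = z then (Fintype.card X : ℂ) * E 1 x y else 0
  θstar : ℕ → ℝ
  hθstarinj : ∀ i j : ℕ, i ≤ D → j ≤ D → θstar i = θstar j → i = j
  hAstarspec : Astar = ∑ i ∈ Finset.range (D + 1), (θstar i : ℂ) • Estar i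

variable {X : Type*} [Fintype X] [DecidableEq X]

/-- The Terwilliger algebra `T = T(x)`, generated by `A` and `A*`. -/
def TSetup.T (S : TSetup X) : Subalgebra ℂ (Matrix X X ℂ) :=
  Algebra.adjoin ℂ {S.A, S.Astar}

/-- A thin irreducible `T`-module `W` with endpoint `r`, dual endpoint `t` and diameter `d`,
where `E*_i W ≠ 0` iff `r ≤ i ≤ r + d` and `E_i W ≠ 0` iff `t ≤ i ≤ t + d`. -/
structure TMod (S : TSetup X) where
  W : Submodule ℂ (X → ℂ)
  hWinv : ∀ B ∈ S.T, ∀ w ∈ W, B *ᵥ w ∈ W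
  hWne : W ≠ ⊥
  hWirr : ∀ U : Submodule ℂ (X → ℂ), U ≤ W →
    (∀ B ∈ S.T, ∀ w ∈ U, B *ᵥ w ∈ U) → U = ⊥ ∨ U = W
  hthin : ∀ i : ℕ, Module.finrank ℂ (W.map (S.Estar i).mulVecLin) ≤ 1
  r : ℕ
  t : ℕ
  d : ℕ
  hr : ∀ i : ℕ, W.map (S.Estar i).mulVecLin ≠ ⊥ ↔ r ≤ i ∧ i ≤ r + d
  ht : ∀ i : ℕ, W.map (S.E i).mulVecLin ≠ ⊥ ↔ t ≤ i ∧ i ≤ t + d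

open Classical in
/-- The action of a matrix `B` on `W` (the restriction of `B` to `W`; defined to be `0`
if `B` does not leave `W` invariant). -/
def actW (S : TSetup X) (M : TMod S) (B : Matrix X X ℂ) : M.W →ₗ[ℂ] M.W :=
  if h : ∀ w ∈ M.W, B.mulVecLin w ∈ M.W then B.mulVecLin.restrict h else 0

/-- `tr_W(B)`: the trace of the action of `B` on `W`. -/
def trW (S : TSetup X) (M : TMod S) (B : Matrix X X ℂ) : ℂ :=
  LinearMap.trace ℂ M.W (actW S M B)

/-- `a_i(W) = tr_W(E*_{r+i} A)`. -/
def aW (S : TSetup X) (M : TMod S) (i : ℕ) : ℂ :=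
  trW S M (S.Estar (M.r + i) * S.A)

/-- `x_i(W) = tr_W(E*_{r+i} A E*_{r+i-1} A)`, with `x_0(W) = 0`. -/
def xW (S : TSetup X) (M : TMod S) (i : ℕ) : ℂ :=
  if i = 0 then 0 else trW S M (S.Estar (M.r + i) * S.A * S.Estar (M.r + i - 1) * S.A)

/-- `a*_i(W) = tr_W(E_{t+i} A*)`. -/
def astarW (S : TSetup X) (M : TMod S) (i : ℕ) : ℂ :=
  trW S M (S.E (M.t + i) * S.Astar)

/-- `x*_i(W) = tr_W(E_{t+i} A* E_{t+i-1} A*)`, with `x*_0(W) = 0`. -/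
def xstarW (S : TSetup X) (M : TMod S) (i : ℕ) : ℂ :=
  if i = 0 then 0 else trW S M (S.E (M.t + i) * S.Astar * S.E (M.t + i - 1) * S.Astar)

/-- The polynomials `p_i`: `p_0 = 1`, `p_{-1} = 0`,
`λ p_i = p_{i+1} + a_i(W) p_i + x_i(W) p_{i-1}`. -/
def pW (S : TSetup X) (M : TMod S) : ℕ → Polynomial ℂ
  | 0 => 1
  | 1 => Polynomial.X - Polynomial.C (aW S M 0)
  | (n + 2) =>
      (Polynomial.X - Polynomial.C (aW S M (n + 1))) * pW S M (n + 1)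
        - Polynomial.C (xW S M (n + 1)) * pW S M n

/-- The polynomials `p*_i`: `p*_0 = 1`, `p*_{-1} = 0`,
`λ p*_i = p*_{i+1} + a*_i(W) p*_i + x*_i(W) p*_{i-1}`. -/
def pstarW (S : TSetup X) (M : TMod S) : ℕ → Polynomial ℂ
  | 0 => 1
  | 1 => Polynomial.X - Polynomial.C (astarW S M 0)
  | (n + 2) =>
      (Polynomial.X - Polynomial.C (astarW S M (n + 1))) * pstarW S M (n + 1)
        - Polynomial.C (xstarW S M (n + 1)) * pstarW S M n

/-- The Hermitian inner product `⟨u,v⟩ = Σ_y u_y conj(v_y)` on `ℂ^X`. -/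
def herm (u v : X → ℂ) : ℂ := ∑ y, u y * (starRingEnd ℂ) (v y)

/-- `ν(W)`, the multiplicative inverse of `m_0(W) = tr_W(E_t E*_r)`. -/
def nuW (S : TSetup X) (M : TMod S) : ℂ :=
  (trW S M (S.E M.t * S.Estar M.r))⁻¹

/-- `k_i(W) = ν(W) m*_i(W)` where `m*_i(W) = tr_W(E*_{r+i} E_t)`. -/
def kW (S : TSetup X) (M : TMod S) (i : ℕ) : ℂ :=
  nuW S M * trW S M (S.Estar (M.r + i) * S.E M.t)

/-- `k*_i(W) = ν(W) m_i(W)` where `m_i(W) = tr_W(E_{t+i} E*_r)`. -/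
def kstarW (S : TSetup X) (M : TMod S) (i : ℕ) : ℂ :=
  nuW S M * trW S M (S.E (M.t + i) * S.Estar M.r)

lemma rank_one_trace {W : Type*} [AddCommGroup W] [Module ℂ W] [FiniteDimensional ℂ W]
    (g Y : Module.End ℂ W)
    (thin : Module.finrank ℂ (LinearMap.range g) ≤ 1) (hY : g * Y = Y) (w : W) (hw : g w = w) :
    Y w = (LinearMap.trace ℂ W Y) • w := by
  by_cases h0 : w = 0
  · simp [h0]
  obtain ⟨e, he⟩ := finrank_le_one_iff.mp thin
  have hsp : ∀ z : W, ∃ c : ℂ, g z = c • w := by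
    intro z
    obtain ⟨c, hc⟩ := he ⟨g z, z, rfl⟩
    obtain ⟨c', hc'⟩ := he ⟨w, w, hw⟩
    have h1 : c • (e : W) = g z := congrArg Subtype.val hc
    have h2 : c' • (e : W) = w := congrArg Subtype.val hc'
    have h3 : c' ≠ 0 := by
      rintro rfl
      apply h0
      rw [← h2, zero_smul]
    refine ⟨c * c'⁻¹, ?_⟩
    rw [← h1, ← h2, smul_smul]
    congr 1
    field_simp
  have hsp' : ∀ z : W, ∃ c : ℂ, Y z = c • w := by
    intro z
    obtain ⟨c, hc⟩ := hsp (Y z)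
    refine ⟨c, ?_⟩
    rw [← hc, ← Module.End.mul_apply, hY]
  choose c hc using hsp'
  have hinj : ∀ a b : ℂ, a • w = b • w → a = b := fun a b h => smul_left_injective ℂ h0 h
  let φ : W →ₗ[ℂ] ℂ :=
    { toFun := c
      map_add' := by
        intro y z
        apply hinj
        rw [← hc, map_add, add_smul, hc, hc]
      map_smul' := by
        intro a z
        apply hinj
        rw [← hc, map_smul, hc, smul_smul]; rfl }
  have hYe : Y = φ.smulRight w := by
    ext z
    simp [φ, hc z]
  have : LinearMap.trace ℂ W Y = c w := by
    rw [hYe, LinearMap.trace_smulRight]; rfl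
  rw [this, hc]

lemma core {W : Type*} [AddCommGroup W] [Module ℂ W] [FiniteDimensional ℂ W]
    (f : ℕ → Module.End ℂ W) (b : Module.End ℂ W) (D r : ℕ)
    (hsum : ∑ i ∈ Finset.range (D + 1), f i = 1)
    (hzero : ∀ i, D < i → f i = 0)
    (orth : ∀ i j, f i * f j = if i = j then f i else 0)
    (tri : ∀ i j, (i + 1 < j ∨ j + 1 < i) → f i * b * f j = 0)
    (thin : ∀ i, Module.finrank ℂ (LinearMap.range (f i)) ≤ 1)
    (hlow : ∀ i, i < r → f i = 0)
    (a x : ℕ → ℂ) (ha : ∀ i, a i = LinearMap.trace ℂ W (f (r + i) * b))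
    (hx : ∀ i, x (i + 1) = LinearMap.trace ℂ W (f (r + (i + 1)) * b * f (r + i) * b))
    (v : W) (hv : f r v = v) (u : ℕ → W) (u0 : u 0 = v) (u1 : u 1 = b v - a 0 • v)
    (u2 : ∀ n, u (n + 2) = b (u (n + 1)) - a (n + 1) • u (n + 1) - x (n + 1) • u n) :
    ∀ i, u i = f (r + i) ((b ^ i) v) := by
  have idem : ∀ i, f i * f i = f i := fun i => by simp [orth]
  have idem' : ∀ i w, f i (f i w) = f i w := fun i w => by
    rw [← Module.End.mul_apply, idem]
  -- decomposition of any vector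
  have dec : ∀ w, w = ∑ j ∈ Finset.range (D + 1), f j w := by
    intro w
    conv_lhs => rw [← Module.End.one_apply w (R := ℂ), ← hsum, LinearMap.sum_apply]
  have tri' : ∀ i j w, (i + 1 < j ∨ j + 1 < i) → f i (b (f j w)) = 0 := by
    intro i j w h
    have := congrArg (fun g => g w) (tri i j h)
    simpa using this
  -- support of b^i v
  have supp : ∀ i j, r + i < j → f j ((b ^ i) v) = 0 := by
    intro i
    induction i with
    | zero =>
      intro j hj
      rw [pow_zero, Module.End.one_apply, ← hv, ← Module.End.mul_apply, orth, if_neg (by omega)]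
      rfl
    | succ i ih =>
      intro j hj
      rw [pow_succ', Module.End.mul_apply, dec ((b ^ i) v), map_sum, map_sum]
      apply Finset.sum_eq_zero
      intro k hk
      by_cases h : r + i < k
      · rw [ih k h]; simp
      · exact tri' _ _ _ (by omega)
  have step : ∀ i, f (r + (i + 1)) ((b ^ (i + 1)) v) = f (r + (i + 1)) (b (f (r + i) ((b ^ i) v))) := by
    intro i
    by_cases hD : D < r + i
    · rw [hzero (r + (i + 1)) (by omega)]; simp
    rw [pow_succ', Module.End.mul_apply]
    conv_lhs => rw [dec ((b ^ i) v), map_sum, map_sum]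
    rw [Finset.sum_eq_single (r + i)]
    · intro k hk hne
      by_cases h : r + i < k
      · rw [supp i k h]; simp
      · exact tri' _ _ _ (by omega)
    · intro h
      simp at h; omega
  have hA : ∀ i w, f (r + i) w = w → f (r + i) (b w) = a i • w := by
    intro i w hw
    rw [ha]
    exact rank_one_trace (f (r + i)) (f (r + i) * b) (thin _)
      (by rw [← mul_assoc, idem]) w hw
  have hX : ∀ i w, f (r + i) w = w → f (r + i) (b (f (r + (i + 1)) (b w))) = x (i + 1) • w := by
    intro i w hw
    have : x (i + 1) = LinearMap.trace ℂ W (f (r + i) * b * (f (r + (i + 1)) * b)) := by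
      rw [hx, mul_assoc (f (r + (i + 1)) * b), LinearMap.trace_mul_comm]
    rw [this]
    exact rank_one_trace (f (r + i)) (f (r + i) * b * (f (r + (i + 1)) * b)) (thin _)
      (by simp only [← mul_assoc, idem]) w hw
  -- three term
  have three : ∀ i w, f (r + (i + 1)) w = w →
      b w = f (r + i) (b w) + f (r + (i + 1)) (b w) + f (r + (i + 2)) (b w) := by
    intro i w hw
    have key : ∀ j, f j (b w) = (if j = r + i then f (r + i) (b w) else 0)
        + (if j = r + (i + 1) then f (r + (i + 1)) (b w) else 0)
        + (if j = r + (i + 2) then f (r + (i + 2)) (b w) else 0) := by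
      intro j
      by_cases h1 : j = r + i
      · subst h1; simp
      by_cases h2 : j = r + (i + 1)
      · subst h2; simp
      by_cases h3 : j = r + (i + 2)
      · subst h3; simp
      rw [if_neg h1, if_neg h2, if_neg h3, ← hw, tri' _ _ _ (by omega)]
      simp
    have aux : ∀ k, (if k ∈ Finset.range (D + 1) then f k (b w) else 0) = f k (b w) := by
      intro k
      split_ifs with h
      · rfl
      · rw [hzero k (by simpa using h)]; simp
    conv_lhs => rw [dec (b w)]
    rw [Finset.sum_congr rfl (fun j _ => key j)]
    simp only [Finset.sum_add_distrib, Finset.sum_ite_eq', aux]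
  have three0 : b v = f r (b v) + f (r + 1) (b v) := by
    have key : ∀ j, f j (b v) = (if j = r then f r (b v) else 0)
        + (if j = r + 1 then f (r + 1) (b v) else 0) := by
      intro j
      by_cases h1 : j = r
      · subst h1; simp
      by_cases h2 : j = r + 1
      · subst h2; simp
      rw [if_neg h1, if_neg h2]
      by_cases h : j < r
      · rw [hlow j h]; simp
      · rw [← hv, tri' _ _ _ (by omega)]; simp
    have aux : ∀ k, (if k ∈ Finset.range (D + 1) then f k (b v) else 0) = f k (b v) := by
      intro k
      split_ifs with h
      · rfl
      · rw [hzero k (by simpa using h)]; simp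
    conv_lhs => rw [dec (b v)]
    rw [Finset.sum_congr rfl (fun j _ => key j)]
    simp only [Finset.sum_add_distrib, Finset.sum_ite_eq', aux]
  have main : ∀ i, u i = f (r + i) ((b ^ i) v) ∧ u (i + 1) = f (r + (i + 1)) ((b ^ (i + 1)) v) := by
    intro i
    induction i with
    | zero =>
      constructor
      · simp [u0, hv]
      · have := hA 0 v (by simpa using hv)
        simp only [zero_add, pow_one, add_zero] at this ⊢
        rw [u1, ← this]
        nth_rewrite 1 [three0]
        abel
    | succ i ih =>
      refine ⟨ih.2, ?_⟩
      obtain ⟨h1, h2⟩ := ih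
      have fi : f (r + i) (u i) = u i := by rw [h1, idem']
      have fi1 : f (r + (i + 1)) (u (i + 1)) = u (i + 1) := by rw [h2, idem']
      have h2' : u (i + 1) = f (r + (i + 1)) (b (u i)) := by rw [h2, step, ← h1]
      rw [step, ← h2, u2, ← hA (i + 1) _ fi1, ← hX i _ fi, ← h2']
      nth_rewrite 1 [three i _ fi1]
      show _ = f (r + (i + 2)) _
      abel
  exact fun i => (main i).1

open ComplexOrder in
lemma tri_dual (S : TSetup X) (i j : ℕ) (h : i + 1 < j ∨ j + 1 < i) :
    S.E i * S.Astar * S.E j = 0 := by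
  by_cases hi : S.D < i
  · simp [S.hEzero i hi]
  by_cases hj : S.D < j
  · simp [S.hEzero j hj]
  have hD := S.hD3
  have herm : ∀ k, (S.E k)ᴴ = S.E k := by
    intro k
    conv_rhs => rw [← S.hEreal k, ← S.hEsymm k]
    rw [S.hEsymm k]
    ext a b
    have := congrFun (congrFun (S.hEsymm k) a) b
    simp only [Matrix.transpose_apply] at this
    simp [Matrix.conjTranspose_apply, this]
  have idem : ∀ k, k ≤ S.D → S.E k * S.E k = S.E k := fun k hk => by
    rw [S.hEidem k k hk hk, if_pos rfl]
  set g : X → ℂ := fun y => (Fintype.card X : ℂ) * S.E 1 S.x y with hg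
  have hAd : S.Astar = Matrix.diagonal g := by
    ext a b
    rw [S.hAstar, Matrix.diagonal_apply]
  have hAh : S.Astarᴴ = S.Astar := by
    rw [hAd, Matrix.diagonal_conjTranspose]
    congr 1
    ext y
    have := congrFun (congrFun (S.hEreal 1) S.x) y
    simp only [Matrix.map_apply] at this
    simp [hg, this]
  rw [← Matrix.trace_mul_conjTranspose_self_eq_zero_iff]
  rw [Matrix.conjTranspose_mul, Matrix.conjTranspose_mul, herm, herm, hAh]
  have e1 : S.E i * S.Astar * S.E j * (S.E j * (S.Astar * S.E i))
      = S.E i * (S.Astar * S.E j * S.Astar * S.E i) := by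
    have := idem j (by omega)
    simp only [mul_assoc]
    rw [← mul_assoc (S.E j) (S.E j), this]
  have e2 : (S.Astar * S.E j * S.Astar * S.E i) * S.E i = S.Astar * S.E j * (S.E i * S.Astar)ᵀ := by
    rw [mul_assoc, idem i (by omega), Matrix.transpose_mul, S.hEsymm, hAd,
      Matrix.diagonal_transpose]
    simp only [mul_assoc]
  rw [e1, Matrix.trace_mul_comm, e2, hAd, ← Matrix.dotProduct_vecMul_hadamard,
    S.hKrein j i (by omega) (by omega)]
  have hgv : g = (Fintype.card X : ℂ) • (Matrix.row (S.E 1) S.x) := by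
    ext y; simp [hg]
  have hzero : g ᵥ* (∑ h ∈ Finset.range (S.D + 1), (S.q h j i : ℂ) • S.E h) = 0 := by
    rw [hgv, Matrix.smul_vecMul]
    have : (S.E 1) * (∑ h ∈ Finset.range (S.D + 1), (S.q h j i : ℂ) • S.E h) = 0 := by
      rw [Finset.mul_sum]
      apply Finset.sum_eq_zero
      intro k hk
      rw [Matrix.mul_smul, S.hEidem 1 k (by omega) (by simp at hk; omega)]
      split_ifs with h1
      · subst h1
        rw [S.hQpoly0 1 j i (by omega) (by omega) (by omega) (by omega)]
        simp
      · simp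
    have h2 : (Matrix.row (S.E 1) S.x) ᵥ* (∑ h ∈ Finset.range (S.D + 1), (S.q h j i : ℂ) • S.E h)
        = Matrix.row ((S.E 1) * (∑ h ∈ Finset.range (S.D + 1), (S.q h j i : ℂ) • S.E h)) S.x := by
      ext y
      simp [Matrix.vecMul, Matrix.mul_apply, dotProduct]
    rw [h2, this]
    ext y; simp
  rw [Matrix.vecMul_smul, hzero]
  simp

lemma Estar_diag (S : TSetup X) (i : ℕ) :
    S.Estar i = Matrix.diagonal (fun y => if S.G.dist S.x y = i then (1 : ℂ) else 0) := by
  ext y z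
  rw [Matrix.diagonal_apply]
  by_cases hi : S.D < i
  · have := S.hDiamLe S.x y
    rw [S.hEstarzero i hi, if_neg (show ¬ S.G.dist S.x y = i by omega)]
    simp
  · rw [S.hEstar i (by omega)]
    by_cases h1 : y = z <;> by_cases h2 : S.G.dist S.x y = i <;> simp [h1, h2]

lemma Estar_orth (S : TSetup X) (i j : ℕ) :
    S.Estar i * S.Estar j = if i = j then S.Estar i else 0 := by
  rw [Estar_diag, Estar_diag, Matrix.diagonal_mul_diagonal]
  split_ifs with h
  · subst h
    congr 1; ext y; split_ifs <;> simp
  · rw [← Matrix.diagonal_zero]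
    congr 1; ext y
    split_ifs with h1 h2 <;> simp
    omega

lemma Estar_sum (S : TSetup X) : ∑ i ∈ Finset.range (S.D + 1), S.Estar i = 1 := by
  ext y z
  have := S.hDiamLe S.x y
  rw [Matrix.sum_apply]
  simp only [Estar_diag, Matrix.diagonal_apply, Matrix.one_apply]
  by_cases h : y = z
  · simp only [h, if_true]
    rw [Finset.sum_ite_eq, if_pos]
    rw [← h]; simp; omega
  · simp [h]

lemma tri_primal (S : TSetup X) (i j : ℕ) (h : i + 1 < j ∨ j + 1 < i) :
    S.Estar i * S.A * S.Estar j = 0 := by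
  ext y z
  rw [Estar_diag, Estar_diag, Matrix.mul_diagonal, Matrix.diagonal_mul, S.hA]
  by_cases hadj : S.G.Adj y z
  · have h1 := S.hGconn.dist_triangle (u := S.x) (v := y) (w := z)
    have h2 := S.hGconn.dist_triangle (u := S.x) (v := z) (w := y)
    rw [SimpleGraph.dist_eq_one_iff_adj.mpr hadj] at h1
    rw [SimpleGraph.dist_eq_one_iff_adj.mpr hadj.symm] at h2
    by_cases e1 : S.G.dist S.x y = i <;> by_cases e2 : S.G.dist S.x z = j <;> simp [e1, e2]
    omega
  · simp [hadj]

lemma E_orth (S : TSetup X) (i j : ℕ) :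
    S.E i * S.E j = if i = j then S.E i else 0 := by
  by_cases hi : S.D < i
  · simp [S.hEzero i hi]
  by_cases hj : S.D < j
  · rw [S.hEzero j hj, if_neg (by omega)]; simp
  exact S.hEidem i j (by omega) (by omega)

lemma mul_aeval_spec (F : ℕ → Matrix X X ℂ) (B : Matrix X X ℂ) (D : ℕ) (th : ℕ → ℝ)
    (orth : ∀ i j, F i * F j = if i = j then F i else 0)
    (hB : B = ∑ i ∈ Finset.range (D + 1), (th i : ℂ) • F i) (i : ℕ) (hi : i ≤ D)
    (P : Polynomial ℂ) :
    F i * Polynomial.aeval B P = P.eval (th i : ℂ) • F i := by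
  have h1 : F i * B = (th i : ℂ) • F i := by
    rw [hB, Finset.mul_sum, Finset.sum_eq_single i]
    · rw [Matrix.mul_smul, orth, if_pos rfl]
    · intro k _ hk
      rw [Matrix.mul_smul, orth, if_neg (Ne.symm hk), smul_zero]
    · intro h; simp at h; omega
  have h2 : ∀ n : ℕ, F i * B ^ n = ((th i : ℂ) ^ n) • F i := by
    intro n
    induction n with
    | zero => simp
    | succ n ih => rw [pow_succ, ← mul_assoc, ih, Matrix.smul_mul, h1, smul_smul, pow_succ]
  induction P using Polynomial.induction_on' with
  | add p q hp hq => rw [map_add, mul_add, hp, hq, Polynomial.eval_add, add_smul]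
  | monomial n c =>
    rw [Polynomial.aeval_monomial, Polynomial.eval_monomial, ← Algebra.smul_def, Matrix.mul_smul,
      h2, smul_smul]

lemma aeval_mem' (T : Subalgebra ℂ (Matrix X X ℂ)) (B : Matrix X X ℂ) (hB : B ∈ T)
    (P : Polynomial ℂ) : Polynomial.aeval B P ∈ T := by
  induction P using Polynomial.induction_on' with
  | add p q hp hq => rw [map_add]; exact T.add_mem hp hq
  | monomial n c =>
    rw [Polynomial.aeval_monomial, ← Algebra.smul_def]
    exact T.smul_mem (T.pow_mem hB n) c

lemma idem_mem (F : ℕ → Matrix X X ℂ) (B : Matrix X X ℂ) (D : ℕ) (th : ℕ → ℝ)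
    (hsum : ∑ i ∈ Finset.range (D + 1), F i = 1)
    (hzero : ∀ i, D < i → F i = 0)
    (orth : ∀ i j, F i * F j = if i = j then F i else 0)
    (hB : B = ∑ i ∈ Finset.range (D + 1), (th i : ℂ) • F i)
    (hth : ∀ i j, i ≤ D → j ≤ D → th i = th j → i = j)
    (T : Subalgebra ℂ (Matrix X X ℂ)) (hT : B ∈ T) (i : ℕ) : F i ∈ T := by
  by_cases hi : D < i
  · rw [hzero i hi]; exact T.zero_mem
  have key : Polynomial.aeval B
      (Lagrange.basis (Finset.range (D + 1)) (fun k => (th k : ℂ)) i) = F i := by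
    have hinj : Set.InjOn (fun k => (th k : ℂ)) (Finset.range (D + 1)) := by
      intro a ha b hb hab
      simp at ha hb hab
      exact hth a b (by omega) (by omega) hab
    rw [← one_mul (Polynomial.aeval B _), ← hsum, Finset.sum_mul, Finset.sum_eq_single i]
    · rw [mul_aeval_spec F B D th orth hB i (by omega),
        Lagrange.eval_basis_self hinj (by simp; omega), one_smul]
    · intro k hk hne
      rw [mul_aeval_spec F B D th orth hB k (by simp at hk; omega)]
      have := Lagrange.eval_basis_of_ne (v := fun k => (th k : ℂ)) (s := Finset.range (D + 1))
        (Ne.symm hne) hk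
      rw [this, zero_smul]
    · intro h; simp at h; omega
  rw [← key]
  exact aeval_mem' T B hT _

lemma A_mem (S : TSetup X) : S.A ∈ S.T := Algebra.subset_adjoin (by simp)

lemma Astar_mem (S : TSetup X) : S.Astar ∈ S.T := Algebra.subset_adjoin (by simp)

lemma E_mem (S : TSetup X) (i : ℕ) : S.E i ∈ S.T :=
  idem_mem S.E S.A S.D S.θ S.hEsum S.hEzero (E_orth S) S.hAspec S.hθinj S.T (A_mem S) i

lemma Estar_mem (S : TSetup X) (i : ℕ) : S.Estar i ∈ S.T :=
  idem_mem S.Estar S.Astar S.D S.θstar (Estar_sum S) S.hEstarzero (Estar_orth S) S.hAstarspec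
    S.hθstarinj S.T (Astar_mem S) i

lemma actW_apply (S : TSetup X) (M : TMod S) (B : Matrix X X ℂ) (hB : B ∈ S.T) (w : M.W) :
    (actW S M B w : X → ℂ) = B *ᵥ (w : X → ℂ) := by
  have h : ∀ w ∈ M.W, B.mulVecLin w ∈ M.W := fun w hw => M.hWinv B hB w hw
  rw [actW, dif_pos h]
  rfl

lemma actW_mul (S : TSetup X) (M : TMod S) (B C : Matrix X X ℂ) (hB : B ∈ S.T) (hC : C ∈ S.T) :
    actW S M (B * C) = actW S M B * actW S M C := by
  ext1 w
  apply Subtype.ext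
  rw [actW_apply S M _ (S.T.mul_mem hB hC), Module.End.mul_apply, actW_apply S M _ hB,
    actW_apply S M _ hC, Matrix.mulVec_mulVec]

lemma actW_zero (S : TSetup X) (M : TMod S) : actW S M 0 = 0 := by
  ext1 w
  apply Subtype.ext
  rw [actW_apply S M _ S.T.zero_mem]
  simp

lemma transfer (S : TSetup X) (M : TMod S) (F : ℕ → Matrix X X ℂ) (B : Matrix X X ℂ)
    (D r : ℕ) (hB : B ∈ S.T) (hF : ∀ i, F i ∈ S.T)
    (hsum : ∑ i ∈ Finset.range (D + 1), F i = 1)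
    (hzero : ∀ i, D < i → F i = 0)
    (orth : ∀ i j, F i * F j = if i = j then F i else 0)
    (tri : ∀ i j, (i + 1 < j ∨ j + 1 < i) → F i * B * F j = 0)
    (thin : ∀ i, Module.finrank ℂ (M.W.map (F i).mulVecLin) ≤ 1)
    (hlow : ∀ i, i < r → M.W.map (F i).mulVecLin = ⊥)
    (a x : ℕ → ℂ) (ha : ∀ i, a i = trW S M (F (r + i) * B))
    (hx : ∀ i, x (i + 1) = trW S M (F (r + (i + 1)) * B * F (r + i) * B))
    (P : ℕ → Polynomial ℂ) (P0 : P 0 = 1) (P1 : P 1 = Polynomial.X - Polynomial.C (a 0))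
    (P2 : ∀ n, P (n + 2) = (Polynomial.X - Polynomial.C (a (n + 1))) * P (n + 1)
        - Polynomial.C (x (n + 1)) * P n)
    (v : X → ℂ) (hv : v ∈ M.W.map (F r).mulVecLin) (i : ℕ) :
    Polynomial.aeval B (P i) *ᵥ v = F (r + i) *ᵥ (B ^ i *ᵥ v) := by
  have hFv : F r *ᵥ v = v := by
    obtain ⟨w, _, rfl⟩ := hv
    simp [Matrix.mulVec_mulVec, orth]
  have hvW : v ∈ M.W := by
    obtain ⟨w, hw, rfl⟩ := hv
    exact M.hWinv _ (hF r) w hw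
  have haev : ∀ p : Polynomial ℂ, Polynomial.aeval B p ∈ S.T := fun p =>
    aeval_mem' S.T B hB p
  have hpow : ∀ n (w : M.W), (((actW S M B) ^ n) w : X → ℂ) = B ^ n *ᵥ (w : X → ℂ) := by
    intro n
    induction n with
    | zero => intro w; simp
    | succ n ih =>
      intro w
      rw [pow_succ', Module.End.mul_apply, actW_apply S M _ hB, ih, pow_succ',
        Matrix.mulVec_mulVec]
  have := core (fun i => actW S M (F i)) (actW S M B) D r
    (by
      ext1 w
      apply Subtype.ext
      rw [LinearMap.sum_apply, AddSubmonoidClass.coe_finsetSum]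
      simp only [actW_apply S M _ (hF _)]
      rw [← Matrix.sum_mulVec, hsum]
      simp)
    (fun i hi => by simp only [hzero i hi, actW_zero])
    (fun i j => by
      simp only [← actW_mul S M _ _ (hF _) (hF _), orth]
      split_ifs
      · rfl
      · exact actW_zero S M)
    (fun i j h => by
      rw [← actW_mul S M _ _ (hF _) hB, ← actW_mul S M _ _ (S.T.mul_mem (hF _) hB) (hF _), tri i j h,
        actW_zero])
    (fun i => by
      refine le_trans (le_of_eq ?_) (thin i)
      rw [← Submodule.finrank_map_subtype_eq M.W (LinearMap.range (actW S M (F i)))]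
      have hmap : Submodule.map M.W.subtype (LinearMap.range (actW S M (F i)))
          = M.W.map (F i).mulVecLin := by
        ext z
        constructor
        · rintro ⟨_, ⟨w, rfl⟩, rfl⟩
          exact ⟨w, w.2, (actW_apply S M _ (hF i) w).symm⟩
        · rintro ⟨w, hw, rfl⟩
          exact ⟨_, ⟨⟨w, hw⟩, rfl⟩, actW_apply S M _ (hF i) ⟨w, hw⟩⟩
      rw [hmap])
    (fun i hi => by
      ext1 w
      apply Subtype.ext
      rw [actW_apply S M _ (hF i)]
      have h1 : F i *ᵥ (w : X → ℂ) ∈ M.W.map (F i).mulVecLin := ⟨w, w.2, rfl⟩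
      rw [hlow i hi] at h1
      simpa using h1)
    a x
    (fun i => by rw [ha, trW, actW_mul S M _ _ (hF _) hB])
    (fun i => by
      rw [hx, trW, actW_mul S M _ _ (S.T.mul_mem (S.T.mul_mem (hF _) hB) (hF _)) hB,
        actW_mul S M _ _ (S.T.mul_mem (hF _) hB) (hF _), actW_mul S M _ _ (hF _) hB])
    ⟨v, hvW⟩
    (by
      apply Subtype.ext
      rw [actW_apply S M _ (hF r)]
      exact hFv)
    (fun n => ⟨Polynomial.aeval B (P n) *ᵥ v, M.hWinv _ (haev _) v hvW⟩)
    (by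
      apply Subtype.ext
      simp [P0])
    (by
      apply Subtype.ext
      simp [P1, actW_apply S M _ hB, Matrix.sub_mulVec, Algebra.algebraMap_eq_smul_one,
        Matrix.smul_mulVec])
    (by
      intro n
      apply Subtype.ext
      simp [P2, actW_apply S M _ hB, Matrix.sub_mulVec, Algebra.algebraMap_eq_smul_one,
        Matrix.smul_mulVec, sub_mul, ← Matrix.mulVec_mulVec])
    i
  have h2 := congrArg Subtype.val this
  simp only [actW_apply S M _ (hF _), hpow] at h2
  exact h2

lemma primal (S : TSetup X) (M : TMod S) (v : X → ℂ)
    (hv : v ∈ M.W.map (S.Estar M.r).mulVecLin) (i : ℕ) :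
    Polynomial.aeval S.A (pW S M i) *ᵥ v = S.Estar (M.r + i) *ᵥ (S.A ^ i *ᵥ v) := by
  refine transfer S M S.Estar S.A S.D M.r (A_mem S) (Estar_mem S) (Estar_sum S) S.hEstarzero
    (Estar_orth S) (tri_primal S) M.hthin ?_ (aW S M) (xW S M) (fun _ => rfl) ?_ (pW S M)
    rfl rfl (fun _ => rfl) v hv i
  · intro j hj
    by_contra h
    have := (M.hr j).1 h
    omega
  · intro j
    simp only [xW, if_neg (Nat.succ_ne_zero j)]
    rfl

/-- A thin irreducible module is dual thin. -/
lemma dual_thin (S : TSetup X) (M : TMod S) (i : ℕ) :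
    Module.finrank ℂ (M.W.map (S.E i).mulVecLin) ≤ 1 := by
  by_cases hi : S.D < i
  · rw [S.hEzero i hi, Matrix.mulVecLin_zero, Submodule.map_zero]
    simp
  obtain ⟨v, hv, hv0⟩ := (Submodule.ne_bot_iff _).1 ((M.hr M.r).2 ⟨le_refl _, by omega⟩)
  have hvW : v ∈ M.W := by
    obtain ⟨w, hw, rfl⟩ := hv
    exact M.hWinv _ (Estar_mem S _) w hw
  have haev : ∀ p : Polynomial ℂ, Polynomial.aeval S.A p ∈ S.T := fun p =>
    aeval_mem' S.T S.A (A_mem S) p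
  set u : ℕ → X → ℂ := fun n => Polynomial.aeval S.A (pW S M n) *ᵥ v with hu
  set U : Submodule ℂ (X → ℂ) := Submodule.span ℂ (Set.range u) with hU
  have huU : ∀ n, u n ∈ U := fun n => Submodule.subset_span ⟨n, rfl⟩
  have u0 : u 0 = v := by simp [hu, pW]
  have hUW : U ≤ M.W := by
    rw [hU, Submodule.span_le]
    rintro _ ⟨n, rfl⟩
    exact M.hWinv _ (haev _) v hvW
  have stab : ∀ B : Matrix X X ℂ, (∀ n, B *ᵥ u n ∈ U) → ∀ w ∈ U, B *ᵥ w ∈ U := by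
    intro B hB w hw
    have : U ≤ U.comap B.mulVecLin := by
      conv_lhs => rw [hU]
      rw [Submodule.span_le]
      rintro _ ⟨n, rfl⟩
      exact hB n
    exact this hw
  have stabA : ∀ w ∈ U, S.A *ᵥ w ∈ U := by
    apply stab
    intro n
    rcases n with _ | n
    · have : S.A *ᵥ u 0 = u 1 + aW S M 0 • u 0 := by
        simp [hu, pW, Matrix.sub_mulVec, Algebra.algebraMap_eq_smul_one, Matrix.smul_mulVec]
      rw [this]
      exact U.add_mem (huU _) (U.smul_mem _ (huU _))
    · have : S.A *ᵥ u (n + 1) = u (n + 2) + aW S M (n + 1) • u (n + 1) + xW S M (n + 1) • u n := by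
        simp [hu, pW, Matrix.sub_mulVec, Algebra.algebraMap_eq_smul_one, Matrix.smul_mulVec,
          sub_mul, ← Matrix.mulVec_mulVec]
        abel
      rw [this]
      exact U.add_mem (U.add_mem (huU _) (U.smul_mem _ (huU _))) (U.smul_mem _ (huU _))
  have stabAs : ∀ w ∈ U, S.Astar *ᵥ w ∈ U := by
    apply stab
    intro n
    rw [S.hAstarspec, Matrix.sum_mulVec]
    apply U.sum_mem
    intro k _
    rw [Matrix.smul_mulVec]
    apply U.smul_mem
    have : u n = S.Estar (M.r + n) *ᵥ (S.A ^ n *ᵥ v) := primal S M v hv n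
    by_cases hk : k = M.r + n
    · have h2 : S.Estar k *ᵥ u n = u n := by
        rw [this, Matrix.mulVec_mulVec, Estar_orth, if_pos hk, hk]
      rw [h2]; exact huU n
    · have h2 : S.Estar k *ᵥ u n = 0 := by
        rw [this, Matrix.mulVec_mulVec, Estar_orth, if_neg hk, Matrix.zero_mulVec]
      rw [h2]; exact U.zero_mem
  have stabT : ∀ B ∈ S.T, ∀ w ∈ U, B *ᵥ w ∈ U := by
    intro B hB
    refine Algebra.adjoin_induction (p := fun B _ => ∀ w ∈ U, B *ᵥ w ∈ U) ?_ ?_ ?_ ?_ hB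
    · rintro B (rfl | rfl)
      · exact stabA
      · exact stabAs
    · intro c w hw
      rw [Algebra.algebraMap_eq_smul_one, Matrix.smul_mulVec, Matrix.one_mulVec]
      exact U.smul_mem _ hw
    · intro B C _ _ h1 h2 w hw
      rw [Matrix.add_mulVec]
      exact U.add_mem (h1 w hw) (h2 w hw)
    · intro B C _ _ h1 h2 w hw
      rw [← Matrix.mulVec_mulVec]
      exact h1 _ (h2 w hw)
  have hUeq : U = M.W := by
    rcases M.hWirr U hUW stabT with h | h
    · exfalso
      have := huU 0
      rw [h, u0] at this
      exact hv0 (by simpa using this)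
    · exact h
  have hle : M.W.map (S.E i).mulVecLin ≤ Submodule.span ℂ {S.E i *ᵥ v} := by
    rw [← hUeq, hU, Submodule.map_span, Submodule.span_le]
    rintro _ ⟨_, ⟨n, rfl⟩, rfl⟩
    have := mul_aeval_spec S.E S.A S.D S.θ (E_orth S) S.hAspec i (by omega) (pW S M n)
    simp only [hu, Matrix.mulVecLin_apply, Matrix.mulVec_mulVec, this, Matrix.smul_mulVec]
    exact Submodule.smul_mem _ _ (Submodule.mem_span_singleton_self _)
  exact (Submodule.finrank_mono hle).trans ((finrank_span_le_card _).trans (by simp))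

lemma dual (S : TSetup X) (M : TMod S) (v : X → ℂ)
    (hv : v ∈ M.W.map (S.E M.t).mulVecLin) (i : ℕ) :
    Polynomial.aeval S.Astar (pstarW S M i) *ᵥ v = S.E (M.t + i) *ᵥ (S.Astar ^ i *ᵥ v) := by
  refine transfer S M S.E S.Astar S.D M.t (Astar_mem S) (E_mem S) S.hEsum S.hEzero
    (E_orth S) (tri_dual S) (dual_thin S M) ?_ (astarW S M) (xstarW S M) (fun _ => rfl) ?_
    (pstarW S M) rfl rfl (fun _ => rfl) v hv i
  · intro j hj
    by_contra h
    have := (M.ht j).1 h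
    omega
  · intro j
    simp only [xstarW, if_neg (Nat.succ_ne_zero j)]
    rfl

lemma top_zero (S : TSetup X) (M : TMod S) (F B : Matrix X X ℂ) (hF : F ∈ S.T) (hB : B ∈ S.T)
    (G : Matrix X X ℂ) (hG : G ∈ S.T) (h : M.W.map F.mulVecLin = ⊥) (v : X → ℂ)
    (hv : v ∈ M.W.map G.mulVecLin) : F *ᵥ (B *ᵥ v) = 0 := by
  have hvW : v ∈ M.W := by
    obtain ⟨w, hw, rfl⟩ := hv
    exact M.hWinv _ hG w hw
  have h1 : F *ᵥ (B *ᵥ v) ∈ M.W.map F.mulVecLin := ⟨_, M.hWinv B hB v hvW, rfl⟩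
  rw [h] at h1
  simpa using h1

/-- For nonzero `v ∈ E*_r W`: `p_i(A) v = E*_{r+i} A^i v` for `0 ≤ i ≤ d` and
`p_{d+1}(A) v = 0`; dually for nonzero `u ∈ E_t W` with `p*_i(A*)`. -/
theorem stmt6 (S : TSetup X) (M : TMod S) (hd : 0 < M.d) :
    (∀ v ∈ M.W.map (S.Estar M.r).mulVecLin, v ≠ 0 →
      (∀ i ≤ M.d,
        (Polynomial.aeval S.A (pW S M i)) *ᵥ v = S.Estar (M.r + i) *ᵥ (S.A ^ i *ᵥ v)) ∧
      (Polynomial.aeval S.A (pW S M (M.d + 1))) *ᵥ v = 0) ∧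
    (∀ u ∈ M.W.map (S.E M.t).mulVecLin, u ≠ 0 →
      (∀ i ≤ M.d,
        (Polynomial.aeval S.Astar (pstarW S M i)) *ᵥ u = S.E (M.t + i) *ᵥ (S.Astar ^ i *ᵥ u)) ∧
      (Polynomial.aeval S.Astar (pstarW S M (M.d + 1))) *ᵥ u = 0) := by
  refine ⟨fun v hv _ => ⟨fun i _ => primal S M v hv i, ?_⟩,
    fun u hu _ => ⟨fun i _ => dual S M u hu i, ?_⟩⟩
  · rw [primal S M v hv]
    refine top_zero S M _ _ (Estar_mem S _) (S.T.pow_mem (A_mem S) _) _ (Estar_mem S M.r) ?_ v hv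
    by_contra h
    have := (M.hr _).1 h
    omega
  · rw [dual S M u hu]
    refine top_zero S M _ _ (E_mem S _) (S.T.pow_mem (Astar_mem S) _) _ (E_mem S M.t) ?_ u hu
    by_contra h
    have := (M.ht _).1 h
    omega
end
end

section
/- Let W and W' be thin irreducible T-modules. Then the following are equivalent: (i) W and W' are isomorphic as T-modules; (ii) W and W' have the same endpoint, dual endpoint, diameter, and the same intersection numbers a_i, b_i, c_i; (iii) W and W' have the same endpoint, dual endpoint, diameter, and the same dual intersection numbers a*_i, b*_i, c*_i. -/
open Matrix
open scoped Classical

noncomputable section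

variable {X : Type*} [Fintype X] [DecidableEq X]

/-- A `T`-module isomorphism from `W` to `W'`: a linear map carrying `W` bijectively onto
`W'` and commuting with every element of `T` on `W`. -/
def TModIso (S : TSetup X) (M M' : TMod S) : Prop :=
  ∃ σ : (X → ℂ) →ₗ[ℂ] (X → ℂ),
    Submodule.map σ M.W = M'.W ∧
    (∀ w ∈ M.W, σ w = 0 → w = 0) ∧
    (∀ B ∈ S.T, ∀ w ∈ M.W, σ (B *ᵥ w) = B *ᵥ σ w)

/-- A system of orthogonal idempotents diagonalizing `C`, with `T` generated by `B` and `C`. -/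
structure DSys (T : Subalgebra ℂ (Matrix X X ℂ)) (B C : Matrix X X ℂ) (F : ℕ → Matrix X X ℂ)
    (D : ℕ) (φ : ℕ → ℝ) : Prop where
  hT : T = Algebra.adjoin ℂ {B, C}
  hz : ∀ i, D < i → F i = 0
  hsum : ∑ i ∈ Finset.range (D + 1), F i = 1
  horth : ∀ i j, F i * F j = if i = j then F i else 0
  hinj : ∀ i j : ℕ, i ≤ D → j ≤ D → φ i = φ j → i = j
  hC : C = ∑ i ∈ Finset.range (D + 1), (φ i : ℂ) • F i

/-- Three-term recurrence. -/
def Rec3 (B : Matrix X X ℂ) (F : ℕ → Matrix X X ℂ) (r d : ℕ) (a b c : ℕ → ℂ) (u : X → ℂ) : Prop :=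
  ∀ i ≤ d, B *ᵥ (F (r + i) *ᵥ u) =
        (if i = 0 then 0 else b (i - 1) • (F (r + (i - 1)) *ᵥ u))
          + a i • (F (r + i) *ᵥ u)
          + c (i + 1) • (F (r + (i + 1)) *ᵥ u)

section generic

variable {T : Subalgebra ℂ (Matrix X X ℂ)} {B C : Matrix X X ℂ} {F : ℕ → Matrix X X ℂ}
    {D : ℕ} {φ : ℕ → ℝ}

theorem DSys.B_mem (h : DSys T B C F D φ) : B ∈ T := by
  rw [h.hT]; exact Algebra.subset_adjoin (by simp)

theorem DSys.C_mem (h : DSys T B C F D φ) : C ∈ T := by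
  rw [h.hT]; exact Algebra.subset_adjoin (by simp)

theorem DSys.C_mul (h : DSys T B C F D φ) (i : ℕ) : C * F i = (φ i : ℂ) • F i := by
  rw [h.hC, Finset.sum_mul]
  by_cases hi : i ≤ D
  · rw [Finset.sum_eq_single i]
    · simp [h.horth]
    · intro j _ hj
      simp [h.horth, hj]
    · intro hn; simp at hn; omega
  · simp [h.hz i (by omega)]

theorem DSys.aeval_mul (h : DSys T B C F D φ) (i : ℕ) (p : Polynomial ℂ) :
    Polynomial.aeval C p * F i = (p.eval (φ i : ℂ)) • F i := by
  induction p using Polynomial.induction_on' with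
  | add p q hp hq => simp [add_mul, hp, hq, add_smul]
  | monomial n a =>
    have : C ^ n * F i = ((φ i : ℂ) ^ n) • F i := by
      induction n with
      | zero => simp
      | succ n ih => rw [pow_succ, mul_assoc, h.C_mul, mul_smul_comm, ih, smul_smul, pow_succ, mul_comm]
    rw [Polynomial.aeval_monomial, mul_assoc, this, Polynomial.eval_monomial, ← Algebra.smul_def,
      smul_smul]

theorem DSys.F_mem (h : DSys T B C F D φ) (i : ℕ) : F i ∈ T := by
  by_cases hi : i ≤ D
  · set p := Lagrange.basis (Finset.range (D + 1)) (fun i => (φ i : ℂ)) i with hp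
    have hinj : Set.InjOn (fun i => (φ i : ℂ)) (Finset.range (D + 1) : Set ℕ) := by
      intro a ha b hb hab
      simp at ha hb hab
      exact h.hinj a b (by omega) (by omega) hab
    have key : Polynomial.aeval C p = F i := by
      calc Polynomial.aeval C p = Polynomial.aeval C p * ∑ j ∈ Finset.range (D + 1), F j := by
            rw [h.hsum, mul_one]
        _ = ∑ j ∈ Finset.range (D + 1), (p.eval (φ j : ℂ)) • F j := by
            rw [Finset.mul_sum]
            exact Finset.sum_congr rfl fun j _ => h.aeval_mul j p
        _ = F i := by
            rw [Finset.sum_eq_single i]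
            · rw [hp, Lagrange.eval_basis_self (v := fun i => (φ i : ℂ)) hinj (by simp; omega), one_smul]
            · intro j hj hne
              rw [hp, Lagrange.eval_basis_of_ne (v := fun i => (φ i : ℂ)) hne.symm hj, zero_smul]
            · intro hn; simp at hn; omega
    rw [← key]
    have := Polynomial.aeval_mem_adjoin_singleton ℂ C (p := p)
    exact (Algebra.adjoin_le (by simpa using h.C_mem)) this
  · rw [h.hz i (by omega)]; exact T.zero_mem

theorem DSys.FF (h : DSys T B C F D φ) (i j : ℕ) (u : X → ℂ) :
    F i *ᵥ (F j *ᵥ u) = if i = j then F i *ᵥ u else 0 := by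
  rw [Matrix.mulVec_mulVec, h.horth]; split_ifs <;> simp

theorem DSys.sum_vec (h : DSys T B C F D φ) (u : X → ℂ) :
    ∑ j ∈ Finset.range (D + 1), F j *ᵥ u = u := by
  rw [← Matrix.sum_mulVec, h.hsum, Matrix.one_mulVec]

theorem DSys.C_vec (h : DSys T B C F D φ) (j : ℕ) (u : X → ℂ) :
    C *ᵥ (F j *ᵥ u) = (φ j : ℂ) • (F j *ᵥ u) := by
  rw [Matrix.mulVec_mulVec, h.C_mul, Matrix.smul_mulVec]

/-- A subspace stable under `B` and `C` is stable under `T`. -/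
theorem DSys.stable (h : DSys T B C F D φ) (U : Submodule ℂ (X → ℂ))
    (hB : ∀ w ∈ U, B *ᵥ w ∈ U) (hC : ∀ w ∈ U, C *ᵥ w ∈ U) :
    ∀ Y ∈ T, ∀ w ∈ U, Y *ᵥ w ∈ U := by
  intro Y hY
  rw [h.hT] at hY
  induction hY using Algebra.adjoin_induction with
  | mem x hx =>
    rcases hx with rfl | rfl
    · exact hB
    · exact hC
  | algebraMap r =>
    intro w hw
    rw [Algebra.algebraMap_eq_smul_one, Matrix.smul_mulVec, Matrix.one_mulVec]
    exact U.smul_mem _ hw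
  | add x y _ _ hx hy =>
    intro w hw
    rw [Matrix.add_mulVec]; exact U.add_mem (hx w hw) (hy w hw)
  | mul x y _ _ hx hy =>
    intro w hw
    rw [← Matrix.mulVec_mulVec]; exact hx _ (hy w hw)

/-- The module is spanned by the components of `u`. -/
theorem DSys.span_eq (h : DSys T B C F D φ) (W : Submodule ℂ (X → ℂ))
    (hinv : ∀ Y ∈ T, ∀ w ∈ W, Y *ᵥ w ∈ W)
    (hirr : ∀ U : Submodule ℂ (X → ℂ), U ≤ W →
      (∀ Y ∈ T, ∀ w ∈ U, Y *ᵥ w ∈ U) → U = ⊥ ∨ U = W)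
    {r d : ℕ} (hr : ∀ i : ℕ, W.map (F i).mulVecLin ≠ ⊥ ↔ r ≤ i ∧ i ≤ r + d)
    {a b c : ℕ → ℂ} {u : X → ℂ} (hu : u ∈ W) (hu0 : u ≠ 0) (hrec : Rec3 B F r d a b c u) :
    Submodule.span ℂ (Set.range fun j => F j *ᵥ u) = W := by
  set U := Submodule.span ℂ (Set.range fun j => F j *ᵥ u) with hU
  have hm : ∀ j, F j *ᵥ u ∈ U := fun j => Submodule.subset_span ⟨j, rfl⟩
  have hle : U ≤ W := by
    rw [hU, Submodule.span_le]
    rintro _ ⟨j, rfl⟩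
    exact hinv _ (h.F_mem j) _ hu
  have hB : ∀ w ∈ U, B *ᵥ w ∈ U := by
    intro w hw
    induction hw using Submodule.span_induction with
    | mem x hx =>
      obtain ⟨j, rfl⟩ := hx
      by_cases hj : r ≤ j ∧ j ≤ r + d
      · obtain ⟨i, rfl⟩ := Nat.exists_eq_add_of_le hj.1
        simp only
        rw [hrec i (by omega)]
        refine U.add_mem (U.add_mem ?_ (U.smul_mem _ (hm _))) (U.smul_mem _ (hm _))
        split_ifs
        · exact U.zero_mem
        · exact U.smul_mem _ (hm _)
      · have : W.map (F j).mulVecLin = ⊥ := by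
          by_contra hne; exact hj ((hr j).1 hne)
        have h0 : F j *ᵥ u = 0 := by
          have : (F j).mulVecLin u ∈ W.map (F j).mulVecLin := Submodule.mem_map_of_mem hu
          simp_all
        simp [h0]
    | zero => simp
    | add x y _ _ hx hy => rw [Matrix.mulVec_add]; exact U.add_mem hx hy
    | smul a x _ hx => rw [Matrix.mulVec_smul]; exact U.smul_mem _ hx
  have hC : ∀ w ∈ U, C *ᵥ w ∈ U := by
    intro w hw
    induction hw using Submodule.span_induction with
    | mem x hx =>
      obtain ⟨j, rfl⟩ := hx
      simp only
      rw [h.C_vec]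
      exact U.smul_mem _ (hm _)
    | zero => simp
    | add x y _ _ hx hy => rw [Matrix.mulVec_add]; exact U.add_mem hx hy
    | smul a x _ hx => rw [Matrix.mulVec_smul]; exact U.smul_mem _ hx
  rcases hirr U hle (h.stable U hB hC) with h0 | h0
  · exfalso; apply hu0
    have : u ∈ U := by
      rw [← h.sum_vec u]; exact U.sum_mem fun j _ => hm j
    rw [h0] at this; simpa using this
  · exact h0

theorem DSys.comp_ne (h : DSys T B C F D φ) (W : Submodule ℂ (X → ℂ))
    {r d : ℕ} (hr : ∀ i : ℕ, W.map (F i).mulVecLin ≠ ⊥ ↔ r ≤ i ∧ i ≤ r + d)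
    {u : X → ℂ} (hu : u ∈ W) (hs : Submodule.span ℂ (Set.range fun j => F j *ᵥ u) = W) (j : ℕ) :
    F j *ᵥ u ≠ 0 ↔ r ≤ j ∧ j ≤ r + d := by
  rw [← hr j]
  constructor
  · intro hne h0
    have : (F j).mulVecLin u ∈ W.map (F j).mulVecLin := Submodule.mem_map_of_mem hu
    simp_all
  · intro hne h0
    apply hne
    rw [← hs, Submodule.map_span, Submodule.span_eq_bot]
    rintro _ ⟨_, ⟨k, rfl⟩, rfl⟩
    simp only [Matrix.mulVecLin_apply]
    rw [h.FF]; simp [h0]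

theorem exists_lin (x y : X → ℂ) (hxy : x = 0 → y = 0) :
    ∃ L : (X → ℂ) →ₗ[ℂ] (X → ℂ), L x = y := by
  by_cases hx : x = 0
  · exact ⟨0, by simp [hxy hx]⟩
  · obtain ⟨k, hk⟩ := Function.ne_iff.1 hx
    refine ⟨(LinearMap.proj k : (X → ℂ) →ₗ[ℂ] ℂ).smulRight ((x k)⁻¹ • y), ?_⟩
    simp only [LinearMap.smulRight_apply, LinearMap.proj_apply, smul_smul]
    rw [mul_inv_cancel₀ hk, one_smul]

/-- Same parameters imply isomorphic. -/
theorem DSys.bwd (h : DSys T B C F D φ) (W W' : Submodule ℂ (X → ℂ))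
    (hinv : ∀ Y ∈ T, ∀ w ∈ W, Y *ᵥ w ∈ W)
    (hirr : ∀ U : Submodule ℂ (X → ℂ), U ≤ W →
      (∀ Y ∈ T, ∀ w ∈ U, Y *ᵥ w ∈ U) → U = ⊥ ∨ U = W)
    (hinv' : ∀ Y ∈ T, ∀ w ∈ W', Y *ᵥ w ∈ W')
    (hirr' : ∀ U : Submodule ℂ (X → ℂ), U ≤ W' →
      (∀ Y ∈ T, ∀ w ∈ U, Y *ᵥ w ∈ U) → U = ⊥ ∨ U = W')
    {r d : ℕ} (hr : ∀ i : ℕ, W.map (F i).mulVecLin ≠ ⊥ ↔ r ≤ i ∧ i ≤ r + d)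
    (hr' : ∀ i : ℕ, W'.map (F i).mulVecLin ≠ ⊥ ↔ r ≤ i ∧ i ≤ r + d)
    {a b c a' b' c' : ℕ → ℂ} {u u' : X → ℂ} (hu : u ∈ W) (hu0 : u ≠ 0)
    (hu' : u' ∈ W') (hu0' : u' ≠ 0)
    (hrec : Rec3 B F r d a b c u) (hrec' : Rec3 B F r d a' b' c' u')
    (ha : ∀ i ≤ d, a i = a' i) (hb : ∀ i < d, b i = b' i)
    (hc : ∀ i : ℕ, 1 ≤ i → i ≤ d → c i = c' i) :
    ∃ σ : (X → ℂ) →ₗ[ℂ] (X → ℂ),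
      Submodule.map σ W = W' ∧ (∀ w ∈ W, σ w = 0 → w = 0) ∧
      (∀ Y ∈ T, ∀ w ∈ W, σ (Y *ᵥ w) = Y *ᵥ σ w) := by
  have hs := h.span_eq W hinv hirr hr hu hu0 hrec
  have hs' := h.span_eq W' hinv' hirr' hr' hu' hu0' hrec'
  have hne := h.comp_ne W hr hu hs
  have hne' := h.comp_ne W' hr' hu' hs'
  have hL : ∀ j, ∃ L : (X → ℂ) →ₗ[ℂ] (X → ℂ), L (F j *ᵥ u) = F j *ᵥ u' := by
    intro j
    apply exists_lin
    intro h0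
    by_contra h1
    exact ((hne j).2 ((hne' j).1 h1)) h0
  choose L hL using hL
  let σ : (X → ℂ) →ₗ[ℂ] (X → ℂ) :=
    ∑ k ∈ Finset.range (D + 1), (L k).comp (F k).mulVecLin
  have hσ : ∀ j, σ (F j *ᵥ u) = F j *ᵥ u' := by
    intro j
    simp only [σ, LinearMap.sum_apply, LinearMap.comp_apply, Matrix.mulVecLin_apply, h.FF]
    by_cases hj : j ≤ D
    · rw [Finset.sum_eq_single j]
      · simp [hL]
      · intro k _ hk; simp [hk]
      · intro hn; simp at hn; omega
    · rw [h.hz j (by omega), Matrix.zero_mulVec]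
      apply Finset.sum_eq_zero
      intro k hk
      simp at hk
      rw [if_neg (by omega), map_zero]
  have hσu : σ u = u' := by
    have e1 := congrArg σ (h.sum_vec u)
    rw [map_sum] at e1
    rw [← e1]
    refine Eq.trans ?_ (h.sum_vec u')
    exact Finset.sum_congr rfl fun j _ => hσ j
  -- the set of vectors on which σ commutes
  have hB : ∀ w ∈ W, σ (B *ᵥ w) = B *ᵥ σ w := by
    intro w hw
    rw [← hs] at hw
    induction hw using Submodule.span_induction with
    | mem x hx =>
      obtain ⟨j, rfl⟩ := hx
      simp only
      rw [hσ]
      by_cases hj : r ≤ j ∧ j ≤ r + d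
      · obtain ⟨i, rfl⟩ := Nat.exists_eq_add_of_le hj.1
        have hi : i ≤ d := by omega
        rw [hrec i hi, hrec' i hi, map_add, map_add, map_smul, map_smul, hσ, hσ, ha i hi]
        congr 1
        · congr 1
          by_cases h0 : i = 0
          · simp [h0]
          · rw [if_neg h0, if_neg h0, map_smul, hσ, hb (i - 1) (by omega)]
        · by_cases hid : i = d
          · have : F (r + (i + 1)) *ᵥ u' = 0 := by
              by_contra h1
              have := (hne' _).1 h1
              omega
            rw [this]; simp
          · rw [hc (i + 1) (by omega) (by omega)]
      · have h0 : F j *ᵥ u = 0 := by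
          by_contra h1; exact hj ((hne j).1 h1)
        have h0' : F j *ᵥ u' = 0 := by
          by_contra h1; exact hj ((hne' j).1 h1)
        simp [h0, h0']
    | zero => simp
    | add x y _ _ hx hy => simp only [Matrix.mulVec_add, map_add, hx, hy]
    | smul a x _ hx => simp only [Matrix.mulVec_smul, map_smul, hx]
  have hC : ∀ w ∈ W, σ (C *ᵥ w) = C *ᵥ σ w := by
    intro w hw
    rw [← hs] at hw
    induction hw using Submodule.span_induction with
    | mem x hx =>
      obtain ⟨j, rfl⟩ := hx
      simp only
      rw [h.C_vec, map_smul, hσ, h.C_vec]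
    | zero => simp
    | add x y _ _ hx hy => simp only [Matrix.mulVec_add, map_add, hx, hy]
    | smul a x _ hx => simp only [Matrix.mulVec_smul, map_smul, hx]
  have hcomm : ∀ Y ∈ T, ∀ w ∈ W, σ (Y *ᵥ w) = Y *ᵥ σ w := by
    intro Y hY
    have hY' := hY
    rw [h.hT] at hY
    induction hY using Algebra.adjoin_induction with
    | mem x hx =>
      rcases hx with rfl | rfl
      · exact hB
      · exact hC
    | algebraMap r =>
      intro w hw
      simp only [Algebra.algebraMap_eq_smul_one, Matrix.smul_mulVec, Matrix.one_mulVec, map_smul]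
    | add x y hx' hy' hx hy =>
      rw [← h.hT] at hx' hy'
      intro w hw
      rw [Matrix.add_mulVec, map_add, hx hx' w hw, hy hy' w hw, Matrix.add_mulVec]
    | mul x y hx' hy' hx hy =>
      rw [← h.hT] at hx' hy'
      intro w hw
      rw [← Matrix.mulVec_mulVec, hx hx' _ (hinv _ hy' _ hw), hy hy' w hw, Matrix.mulVec_mulVec]
  refine ⟨σ, ?_, ?_, hcomm⟩
  · rw [← hs, Submodule.map_span, ← hs', ← Set.range_comp]
    congr 2
    funext j
    exact hσ j
  · have hk : W ⊓ LinearMap.ker σ = ⊥ ∨ W ⊓ LinearMap.ker σ = W := by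
      apply hirr _ inf_le_left
      intro Y hY w hw
      refine ⟨hinv Y hY w hw.1, ?_⟩
      have : σ w = 0 := hw.2
      show σ (Y *ᵥ w) = 0
      rw [hcomm Y hY w hw.1, this, Matrix.mulVec_zero]
    rcases hk with hk | hk
    · intro w hw h0
      have : w ∈ W ⊓ LinearMap.ker σ := ⟨hw, h0⟩
      rw [hk] at this; simpa using this
    · exfalso
      have : u ∈ W ⊓ LinearMap.ker σ := by rw [hk]; exact hu
      have h2 : σ u = 0 := this.2
      exact hu0' (hσu ▸ h2)

/-- Isomorphic implies the same off-diagonal parameters. -/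
theorem DSys.fwd (h : DSys T B C F D φ)
    {r d : ℕ} {a b c a' b' c' : ℕ → ℂ} {u : X → ℂ}
    (σ : (X → ℂ) →ₗ[ℂ] (X → ℂ)) (W : Submodule ℂ (X → ℂ))
    (hinv : ∀ Y ∈ T, ∀ w ∈ W, Y *ᵥ w ∈ W)
    (hu : u ∈ W)
    (hσ : ∀ Y ∈ T, ∀ w ∈ W, σ (Y *ᵥ w) = Y *ᵥ σ w)
    (hrec : Rec3 B F r d a b c u) (hrec' : Rec3 B F r d a' b' c' (σ u))
    (hne : ∀ i ≤ d, F (r + i) *ᵥ σ u ≠ 0) :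
    (∀ i < d, b i = b' i) ∧ (∀ i : ℕ, 1 ≤ i → i ≤ d → c i = c' i) := by
  have hrec2 : Rec3 B F r d a b c (σ u) := by
    intro i hi
    have := congrArg σ (hrec i hi)
    have hF : ∀ j, σ (F j *ᵥ u) = F j *ᵥ σ u := fun j => hσ _ (h.F_mem j) u hu
    rw [hσ _ h.B_mem _ (hinv _ (h.F_mem _) _ hu), hF, map_add, map_add, map_smul, map_smul,
      hF, hF, apply_ite σ, map_smul, hF, map_zero] at this
    exact this
  constructor
  · intro i hi
    have e := (hrec2 (i + 1) (by omega)).symm.trans (hrec' (i + 1) (by omega))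
    have e2 := congrArg (fun v => F (r + i) *ᵥ v) e
    have q1 : ¬ (i = i + 1 + 1) := by omega
    simp [Matrix.mulVec_add, Matrix.mulVec_smul, h.FF, q1] at e2
    exact smul_left_injective ℂ (hne i (by omega)) e2
  · intro i h1 hi
    obtain ⟨k, rfl⟩ := Nat.exists_eq_add_of_le' h1
    have e := (hrec2 k (by omega)).symm.trans (hrec' k (by omega))
    have e2 := congrArg (fun v => F (r + (k + 1)) *ᵥ v) e
    have q1 : ¬ (k + 1 = k - 1) := by omega
    by_cases hk : k = 0
    · subst hk
      simp [Matrix.mulVec_add, Matrix.mulVec_smul, h.FF] at e2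
      exact smul_left_injective ℂ (hne 1 (by omega)) e2
    · simp [Matrix.mulVec_add, Matrix.mulVec_smul, h.FF, hk, q1] at e2
      exact smul_left_injective ℂ (hne (k + 1) (by omega)) e2

theorem map_bot_iff (σ : (X → ℂ) →ₗ[ℂ] (X → ℂ)) (W W' : Submodule ℂ (X → ℂ))
    (hinv : ∀ Y ∈ T, ∀ w ∈ W, Y *ᵥ w ∈ W)
    (hm : Submodule.map σ W = W') (hi : ∀ w ∈ W, σ w = 0 → w = 0)
    (hσ : ∀ Y ∈ T, ∀ w ∈ W, σ (Y *ᵥ w) = Y *ᵥ σ w) (Y : Matrix X X ℂ) (hY : Y ∈ T) :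
    W.map Y.mulVecLin ≠ ⊥ ↔ W'.map Y.mulVecLin ≠ ⊥ := by
  rw [not_iff_not, Submodule.eq_bot_iff, Submodule.eq_bot_iff, ← hm]
  constructor
  · rintro h0 _ ⟨_, ⟨w, hw, rfl⟩, rfl⟩
    have : Y *ᵥ w = 0 := h0 _ ⟨w, hw, rfl⟩
    rw [Matrix.mulVecLin_apply, ← hσ Y hY w hw, this, map_zero]
  · rintro h0 _ ⟨w, hw, rfl⟩
    have : Y *ᵥ σ w = 0 := h0 _ ⟨_, ⟨w, hw, rfl⟩, rfl⟩
    exact hi _ (hinv Y hY w hw) (by rw [Matrix.mulVecLin_apply, hσ Y hY w hw, this])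

end generic

theorem endpts {r d r' d' : ℕ} (h : ∀ i, r ≤ i ∧ i ≤ r + d ↔ r' ≤ i ∧ i ≤ r' + d') :
    r = r' ∧ d = d' := by
  have h1 := (h r).1 (by omega)
  have h2 := (h r').2 (by omega)
  have h3 := (h (r + d)).1 (by omega)
  have h4 := (h (r' + d')).2 (by omega)
  omega

theorem TSetup.sysStar (S : TSetup X) : DSys S.T S.A S.Astar S.Estar S.D S.θstar where
  hT := rfl
  hz := S.hEstarzero
  hsum := by
    ext y z
    rw [Matrix.sum_apply, Finset.sum_eq_single (S.G.dist S.x y)]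
    · rw [S.hEstar _ (S.hDiamLe _ _), Matrix.one_apply]; simp
    · intro j hj hne
      simp at hj
      rw [S.hEstar _ (by omega), if_neg (by tauto)]
    · intro hn
      have := S.hDiamLe S.x y
      simp at hn; omega
  horth := by
    intro i j
    by_cases hi : i ≤ S.D
    · by_cases hj : j ≤ S.D
      · ext y z
        rw [Matrix.mul_apply, Finset.sum_eq_single y]
        · rw [S.hEstar i hi, S.hEstar j hj]
          by_cases hij : i = j
          · subst hij
            rw [if_pos rfl, S.hEstar i hi]
            by_cases hyz : y = z
            · subst hyz; split_ifs <;> simp_all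
            · simp [hyz]
          · rw [if_neg hij, Matrix.zero_apply]
            by_cases hyz : y = z
            · subst hyz; split_ifs <;> simp_all
            · simp [hyz]
        · intro w _ hw
          rw [S.hEstar i hi, if_neg (by tauto), zero_mul]
        · simp
      · rw [S.hEstarzero j (by omega), mul_zero, if_neg (by omega)]
    · rw [S.hEstarzero i (by omega), zero_mul]; simp
  hinj := S.hθstarinj
  hC := S.hAstarspec

theorem TSetup.sys (S : TSetup X) : DSys S.T S.Astar S.A S.E S.D S.θ where
  hT := by rw [TSetup.T, Set.pair_comm]
  hz := S.hEzero
  hsum := S.hEsum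
  horth := by
    intro i j
    by_cases hi : i ≤ S.D
    · by_cases hj : j ≤ S.D
      · exact S.hEidem i j hi hj
      · rw [S.hEzero j (by omega), mul_zero, if_neg (by omega)]
    · rw [S.hEzero i (by omega), zero_mul]; simp
  hinj := S.hθinj
  hC := S.hAspec

theorem trW_eq (S : TSetup X) (M M' : TMod S) (σ : (X → ℂ) →ₗ[ℂ] (X → ℂ))
    (hm : Submodule.map σ M.W = M'.W) (hi : ∀ w ∈ M.W, σ w = 0 → w = 0)
    (hσ : ∀ Y ∈ S.T, ∀ w ∈ M.W, σ (Y *ᵥ w) = Y *ᵥ σ w) (Y : Matrix X X ℂ) (hY : Y ∈ S.T) :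
    trW S M Y = trW S M' Y := by
  have hmem : ∀ w ∈ M.W, σ w ∈ M'.W := fun w hw => hm ▸ Submodule.mem_map_of_mem hw
  let e : M.W ≃ₗ[ℂ] M'.W := LinearEquiv.ofBijective (σ.restrict hmem) (by
    constructor
    · rw [← LinearMap.ker_eq_bot, LinearMap.ker_eq_bot']
      rintro ⟨w, hw⟩ h0
      have : σ w = 0 := congrArg Subtype.val h0
      exact Subtype.ext (hi w hw this)
    · rintro ⟨w', hw'⟩
      have h2 := hw'
      rw [← hm] at h2
      obtain ⟨w, hw, rfl⟩ := h2
      exact ⟨⟨w, hw⟩, rfl⟩)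
  have key : actW S M' Y = e.conj (actW S M Y) := by
    apply LinearMap.ext
    intro w'
    obtain ⟨w, rfl⟩ := e.surjective w'
    rw [LinearEquiv.conj_apply_apply, LinearEquiv.symm_apply_apply]
    apply Subtype.ext
    have h1 : ∀ w ∈ M.W, Y.mulVecLin w ∈ M.W := M.hWinv Y hY
    have h2 : ∀ w ∈ M'.W, Y.mulVecLin w ∈ M'.W := M'.hWinv Y hY
    rw [actW, actW, dif_pos h1, dif_pos h2]
    exact (hσ Y hY w w.2).symm
  rw [trW, trW, key, LinearMap.trace_conj']

theorem TMod.exists_ne (S : TSetup X) (M : TMod S) (Y : Matrix X X ℂ) (hY : Y ∈ S.T)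
    (h : M.W.map Y.mulVecLin ≠ ⊥) : ∃ w ∈ M.W, Y *ᵥ w ∈ M.W.map Y.mulVecLin ∧ Y *ᵥ w ∈ M.W ∧
      Y *ᵥ w ≠ 0 := by
  obtain ⟨_, ⟨w, hw, rfl⟩, hne⟩ := Submodule.exists_mem_ne_zero_of_ne_bot h
  exact ⟨w, hw, Submodule.mem_map_of_mem hw, M.hWinv _ hY _ hw, hne⟩

/-- Two thin irreducible `T`-modules are isomorphic iff they have the same endpoint, dual
endpoint, diameter and intersection numbers, iff they have the same endpoint, dual
endpoint, diameter and dual intersection numbers. -/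
theorem stmt12 (S : TSetup X) (M M' : TMod S)
    (b c b' c' bs cs bs' cs' : ℕ → ℂ)
    (hbd : b M.d = 0) (hc0 : c 0 = 0) (hcd : c (M.d + 1) = 0)
    (hbc : ∀ u ∈ M.W.map (S.E M.t).mulVecLin, u ≠ 0 → ∀ i ≤ M.d,
      S.A *ᵥ (S.Estar (M.r + i) *ᵥ u) =
        (if i = 0 then 0 else b (i - 1) • (S.Estar (M.r + (i - 1)) *ᵥ u))
          + aW S M i • (S.Estar (M.r + i) *ᵥ u)
          + c (i + 1) • (S.Estar (M.r + (i + 1)) *ᵥ u))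
    (hbd' : b' M'.d = 0) (hc0' : c' 0 = 0) (hcd' : c' (M'.d + 1) = 0)
    (hbc' : ∀ u ∈ M'.W.map (S.E M'.t).mulVecLin, u ≠ 0 → ∀ i ≤ M'.d,
      S.A *ᵥ (S.Estar (M'.r + i) *ᵥ u) =
        (if i = 0 then 0 else b' (i - 1) • (S.Estar (M'.r + (i - 1)) *ᵥ u))
          + aW S M' i • (S.Estar (M'.r + i) *ᵥ u)
          + c' (i + 1) • (S.Estar (M'.r + (i + 1)) *ᵥ u))
    (hbsd : bs M.d = 0) (hcs0 : cs 0 = 0) (hcsd : cs (M.d + 1) = 0)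
    (hbcs : ∀ v ∈ M.W.map (S.Estar M.r).mulVecLin, v ≠ 0 → ∀ i ≤ M.d,
      S.Astar *ᵥ (S.E (M.t + i) *ᵥ v) =
        (if i = 0 then 0 else bs (i - 1) • (S.E (M.t + (i - 1)) *ᵥ v))
          + astarW S M i • (S.E (M.t + i) *ᵥ v)
          + cs (i + 1) • (S.E (M.t + (i + 1)) *ᵥ v))
    (hbsd' : bs' M'.d = 0) (hcs0' : cs' 0 = 0) (hcsd' : cs' (M'.d + 1) = 0)
    (hbcs' : ∀ v ∈ M'.W.map (S.Estar M'.r).mulVecLin, v ≠ 0 → ∀ i ≤ M'.d,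
      S.Astar *ᵥ (S.E (M'.t + i) *ᵥ v) =
        (if i = 0 then 0 else bs' (i - 1) • (S.E (M'.t + (i - 1)) *ᵥ v))
          + astarW S M' i • (S.E (M'.t + i) *ᵥ v)
          + cs' (i + 1) • (S.E (M'.t + (i + 1)) *ᵥ v)) :
    (TModIso S M M' ↔
      (M.r = M'.r ∧ M.t = M'.t ∧ M.d = M'.d ∧
        (∀ i ≤ M.d, aW S M i = aW S M' i) ∧
        (∀ i < M.d, b i = b' i) ∧
        (∀ i : ℕ, 1 ≤ i → i ≤ M.d → c i = c' i))) ∧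
    (TModIso S M M' ↔
      (M.r = M'.r ∧ M.t = M'.t ∧ M.d = M'.d ∧
        (∀ i ≤ M.d, astarW S M i = astarW S M' i) ∧
        (∀ i < M.d, bs i = bs' i) ∧
        (∀ i : ℕ, 1 ≤ i → i ≤ M.d → cs i = cs' i))) := by
  have hs := S.sysStar
  have hq := S.sys
  have hEne : M.W.map (S.E M.t).mulVecLin ≠ ⊥ := (M.ht _).2 (by omega)
  have hEne' : M'.W.map (S.E M'.t).mulVecLin ≠ ⊥ := (M'.ht _).2 (by omega)
  have hFne : M.W.map (S.Estar M.r).mulVecLin ≠ ⊥ := (M.hr _).2 (by omega)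
  have hFne' : M'.W.map (S.Estar M'.r).mulVecLin ≠ ⊥ := (M'.hr _).2 (by omega)
  obtain ⟨w, hw, hu, huW, hu0⟩ := M.exists_ne S _ (hq.F_mem M.t) hEne
  obtain ⟨w', hw', hu', huW', hu0'⟩ := M'.exists_ne S _ (hq.F_mem M'.t) hEne'
  obtain ⟨z, hz, hv, hvW, hv0⟩ := M.exists_ne S _ (hs.F_mem M.r) hFne
  obtain ⟨z', hz', hv', hvW', hv0'⟩ := M'.exists_ne S _ (hs.F_mem M'.r) hFne'
  have par : TModIso S M M' → M.r = M'.r ∧ M.t = M'.t ∧ M.d = M'.d := by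
    rintro ⟨σ, hm, hi, hσ⟩
    have h1 : M.r = M'.r ∧ M.d = M'.d := endpts fun i => by
      rw [← M.hr, ← M'.hr]
      exact map_bot_iff σ _ _ M.hWinv hm hi hσ _ (hs.F_mem i)
    have h2 : M.t = M'.t ∧ M.d = M'.d := endpts fun i => by
      rw [← M.ht, ← M'.ht]
      exact map_bot_iff σ _ _ M.hWinv hm hi hσ _ (hq.F_mem i)
    exact ⟨h1.1, h2.1, h1.2⟩
  refine ⟨⟨fun hiso => ?_, ?_⟩, ⟨fun hiso => ?_, ?_⟩⟩
  · obtain ⟨e1, e2, e3⟩ := par hiso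
    obtain ⟨σ, hm, hi, hσ⟩ := hiso
    have hσu : σ (S.E M.t *ᵥ w) ∈ M'.W.map (S.E M'.t).mulVecLin := by
      rw [hσ _ (hq.F_mem _) w hw, e2]
      exact Submodule.mem_map_of_mem (hm ▸ Submodule.mem_map_of_mem hw)
    have hσW : σ (S.E M.t *ᵥ w) ∈ M'.W := hm ▸ Submodule.mem_map_of_mem huW
    have hσ0 : σ (S.E M.t *ᵥ w) ≠ 0 := fun h0 => hu0 (hi _ huW h0)
    have R' : Rec3 S.A S.Estar M'.r M'.d (aW S M') b' c' _ := hbc' _ hσu hσ0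
    have hsp := hs.span_eq M'.W M'.hWinv M'.hWirr M'.hr hσW hσ0 R'
    have hne := hs.comp_ne M'.W M'.hr hσW hsp
    have R : Rec3 S.A S.Estar M.r M.d (aW S M) b c _ := hbc _ hu hu0
    rw [← e1, ← e3] at R'
    have := hs.fwd σ M.W M.hWinv huW hσ R R' (fun i hi => (hne _).2 (by omega))
    refine ⟨e1, e2, e3, fun i _ => ?_, this.1, this.2⟩
    rw [aW, aW, ← e1]
    exact trW_eq S M M' σ hm hi hσ _ (S.T.mul_mem (hs.F_mem _) hs.B_mem)
  · rintro ⟨e1, e2, e3, ha, hb, hc⟩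
    have R : Rec3 S.A S.Estar M.r M.d (aW S M) b c _ := hbc _ hu hu0
    have R' : Rec3 S.A S.Estar M'.r M'.d (aW S M') b' c' _ := hbc' _ hu' hu0'
    have hr' := M'.hr
    rw [← e1, ← e3] at R' hr'
    exact hs.bwd M.W M'.W M.hWinv M.hWirr M'.hWinv M'.hWirr M.hr hr' huW hu0 huW' hu0' R R'
      ha hb hc
  · obtain ⟨e1, e2, e3⟩ := par hiso
    obtain ⟨σ, hm, hi, hσ⟩ := hiso
    have hσu : σ (S.Estar M.r *ᵥ z) ∈ M'.W.map (S.Estar M'.r).mulVecLin := by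
      rw [hσ _ (hs.F_mem _) z hz, e1]
      exact Submodule.mem_map_of_mem (hm ▸ Submodule.mem_map_of_mem hz)
    have hσW : σ (S.Estar M.r *ᵥ z) ∈ M'.W := hm ▸ Submodule.mem_map_of_mem hvW
    have hσ0 : σ (S.Estar M.r *ᵥ z) ≠ 0 := fun h0 => hv0 (hi _ hvW h0)
    have R' : Rec3 S.Astar S.E M'.t M'.d (astarW S M') bs' cs' _ := hbcs' _ hσu hσ0
    have hsp := hq.span_eq M'.W M'.hWinv M'.hWirr M'.ht hσW hσ0 R'
    have hne := hq.comp_ne M'.W M'.ht hσW hsp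
    have R : Rec3 S.Astar S.E M.t M.d (astarW S M) bs cs _ := hbcs _ hv hv0
    rw [← e2, ← e3] at R'
    have := hq.fwd σ M.W M.hWinv hvW hσ R R' (fun i hi => (hne _).2 (by omega))
    refine ⟨e1, e2, e3, fun i _ => ?_, this.1, this.2⟩
    rw [astarW, astarW, ← e2]
    exact trW_eq S M M' σ hm hi hσ _ (S.T.mul_mem (hq.F_mem _) hq.B_mem)
  · rintro ⟨e1, e2, e3, ha, hb, hc⟩
    have R : Rec3 S.Astar S.E M.t M.d (astarW S M) bs cs _ := hbcs _ hv hv0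
    have R' : Rec3 S.Astar S.E M'.t M'.d (astarW S M') bs' cs' _ := hbcs' _ hv' hv0'
    have ht' := M'.ht
    rw [← e2, ← e3] at R' ht'
    exact hq.bwd M.W M'.W M.hWinv M.hWirr M'.hWinv M'.hWirr M.ht ht' hvW hv0 hvW' hv0' R R'
      ha hb hc
end
end
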